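/- Let E be a finite dimensional Banach space and let F and Y be Banach spaces such that the factorization constants f(Y,F) and f(Y,F*) exist (are finite). Then K_G(E,Y) ≤ min{f(Y,F), f(Y,F*)}·K_G(E,F), and likewise K_G^+(E,Y) ≤ min{f(Y,F), f(Y,F*)}·K_G^+(E,F). -/

import Mathlib

/-!
Factoring the identity of `Y` through `Z` gives `K_G(E,Y) ≤ ‖u‖ ‖v‖ K_G(E,Z)` by the ideal property
of the two tensor norms (`relKG_le_of_factorization`). This settles `Z = F`, and for `Z = F*` it
remains to see that `K_G(E,F*) ≤ K_G(E,F)` (`relKG_dual_le`).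

For the latter, trace duality pairs `E* ⊗ F*` with `E ⊗ F`, and `E* ⊗̂ F*` is isometrically the dual
of `E ⊗̌ F` (`projNorm_le_of_tracePairing_le`). To see this, embed `E` almost isometrically in
`ℓ_∞^n` by evaluation at a finite net of the unit ball of `E*`; then `E ⊗̌ F` sits almost
isometrically in `ℓ_∞^n(F)`, and a Hahn–Banach extension to `ℓ_∞^n(F)` of the functional defined by
`w`, an element of `ℓ_1^n(F*)`, is a decomposition of `w` into elementary tensors.
Finally, `⟨(A ⊗ id) u, v⟩ = ⟨u, (Aᵀ ⊗ id) v⟩`, which is at most `‖u‖ ‖(Aᵀ ⊗ id) v‖_∧`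
(`tracePairing_comp_le`). As the admissible classes of `A` are stable under transposition, the
supremum over `v` is at most `K_G(E,F)`. Both constants are instances of `relKG`, with the maps `A`
restricted by a predicate.
-/

open scoped BigOperators

/-- The projective tensor norm of the element of `X* ⊗ F` corresponding (via the canonical
identification, `X` finite dimensional) to the continuous linear map `u : X → F`. -/
noncomputable def projNorm {X F : Type*} [NormedAddCommGroup X] [NormedSpace ℝ X]
    [NormedAddCommGroup F] [NormedSpace ℝ F] (u : X →L[ℝ] F) : ℝ :=
  sInf { r : ℝ | ∃ (k : ℕ) (η : Fin k → (X →L[ℝ] ℝ)) (f : Fin k → F),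
    (∀ x, u x = ∑ i, η i x • f i) ∧ r = ∑ i, ‖η i‖ * ‖f i‖ }

/-- The Grothendieck constant `K_G(E,F)`.  An element of `E ⊗ F` is encoded as a map
`u : E* → F`, an element of `E* ⊗ F` as a map `E → F`, and `A ⊗ id_F` sends `u` to
`u ∘ Aᵀ`, where `Aᵀ = A.flip : E → E*`. -/
noncomputable def KG (E F : Type*) [NormedAddCommGroup E] [NormedSpace ℝ E]
    [NormedAddCommGroup F] [NormedSpace ℝ F] : ℝ :=
  sSup { r : ℝ | ∃ (A : E →L[ℝ] (E →L[ℝ] ℝ)) (u : (E →L[ℝ] ℝ) →L[ℝ] F),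
    ‖A‖ ≤ 1 ∧ ‖u‖ ≤ 1 ∧ r = projNorm (u.comp A.flip) }

/-- `ρ(E,F)`: the norm of the identity from `E ⊗̌ F` to `E ⊗̂ F`. -/
noncomputable def rho (E F : Type*) [NormedAddCommGroup E] [NormedSpace ℝ E]
    [NormedAddCommGroup F] [NormedSpace ℝ F] : ℝ :=
  sSup { r : ℝ | ∃ u : (E →L[ℝ] ℝ) →L[ℝ] F, ‖u‖ ≤ 1 ∧ r = projNorm u }

/-- `A : E → E*` is non-negative: the corresponding tensor in `E* ⊗ E*` is a (finite) sum of
symmetric tensors `η ⊗ η`, i.e. lies in the convex hull of such tensors. -/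
def IsNonnegMap {E : Type*} [NormedAddCommGroup E] [NormedSpace ℝ E]
    (A : E →L[ℝ] (E →L[ℝ] ℝ)) : Prop :=
  ∃ (k : ℕ) (η : Fin k → (E →L[ℝ] ℝ)), ∀ x, A x = ∑ i, η i x • η i

/-- A tensor `z ∈ E ⊗ E` (encoded as a map `E* → E`) is non-negative if it is a finite sum of
symmetric tensors `e ⊗ e`. -/
def IsNonnegTensor {E : Type*} [NormedAddCommGroup E] [NormedSpace ℝ E]
    (z : (E →L[ℝ] ℝ) →L[ℝ] E) : Prop :=
  ∃ (k : ℕ) (e : Fin k → E), ∀ φ, z φ = ∑ i, φ (e i) • e i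

/-- The positive Grothendieck constant `K_G⁺(E,F)`. -/
noncomputable def KGpos (E F : Type*) [NormedAddCommGroup E] [NormedSpace ℝ E]
    [NormedAddCommGroup F] [NormedSpace ℝ F] : ℝ :=
  sSup { r : ℝ | ∃ (A : E →L[ℝ] (E →L[ℝ] ℝ)) (u : (E →L[ℝ] ℝ) →L[ℝ] F),
    IsNonnegMap A ∧ ‖A‖ ≤ 1 ∧ ‖u‖ ≤ 1 ∧ r = projNorm (u.comp A.flip) }

/-- The factorization constant `f(X,E)` of `X` through `E`. -/
noncomputable def factConst (X E : Type*) [NormedAddCommGroup X] [NormedSpace ℝ X]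
    [NormedAddCommGroup E] [NormedSpace ℝ E] : ℝ :=
  sInf { r : ℝ | ∃ (u : X →L[ℝ] E) (v : E →L[ℝ] X),
    v.comp u = ContinuousLinearMap.id ℝ X ∧ r = ‖u‖ * ‖v‖ }

/-- `γ(E) = sup { tr(BA) : A ≥ 0, B ≥ 0, ‖A‖ ≤ 1, ‖B‖ ≤ 1 }`. -/
noncomputable def gammaConst (E : Type*) [NormedAddCommGroup E] [NormedSpace ℝ E] : ℝ :=
  sSup { r : ℝ | ∃ (A : E →L[ℝ] (E →L[ℝ] ℝ)) (B : (E →L[ℝ] ℝ) →L[ℝ] E),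
    IsNonnegMap A ∧ IsNonnegTensor B ∧ ‖A‖ ≤ 1 ∧ ‖B‖ ≤ 1 ∧
    r = LinearMap.trace ℝ E ((B.comp A : E →L[ℝ] E) : E →ₗ[ℝ] E) }

/-- `ρ⁺(E)`: as `ρ(E,E)` but the supremum is restricted to non-negative tensors. -/
noncomputable def rhoPlus (E : Type*) [NormedAddCommGroup E] [NormedSpace ℝ E] : ℝ :=
  sSup { r : ℝ | ∃ z : (E →L[ℝ] ℝ) →L[ℝ] E,
    IsNonnegTensor z ∧ ‖z‖ ≤ 1 ∧ r = projNorm z }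

/-- `X` has (Rademacher) cotype `q`. -/
def HasCotype (X : Type*) [NormedAddCommGroup X] [NormedSpace ℝ X] (q : ℝ) : Prop :=
  ∃ C > 0, ∀ (n : ℕ) (x : Fin n → X),
    (∑ i, ‖x i‖ ^ q) ^ (1/q) ≤
      C * (((2 : ℝ) ^ n)⁻¹ *
        ∑ ε : Fin n → Bool, ‖∑ i, (if ε i then (1:ℝ) else -1) • x i‖ ^ 2) ^ (1/2 : ℝ)

section Auxiliary

variable {X E F Y Z : Type*}
  [NormedAddCommGroup X] [NormedSpace ℝ X]
  [NormedAddCommGroup E] [NormedSpace ℝ E]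
  [NormedAddCommGroup F] [NormedSpace ℝ F]
  [NormedAddCommGroup Y] [NormedSpace ℝ Y]
  [NormedAddCommGroup Z] [NormedSpace ℝ Z]

/-! ### The projective norm -/

lemma projNorm_nonneg (u : X →L[ℝ] F) : 0 ≤ projNorm u := by
  apply Real.sInf_nonneg
  rintro r ⟨k, η, f, -, rfl⟩
  positivity

lemma projNorm_le_sum {ι : Type*} [Fintype ι] (u : X →L[ℝ] F) (η : ι → (X →L[ℝ] ℝ)) (f : ι → F)
    (h : ∀ x, u x = ∑ i, η i x • f i) : projNorm u ≤ ∑ i, ‖η i‖ * ‖f i‖ := by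
  refine csInf_le ⟨0, ?_⟩ ?_
  · rintro r ⟨k, η, f, -, rfl⟩
    positivity
  · let e := Fintype.equivFin ι
    refine ⟨Fintype.card ι, fun i => η (e.symm i), fun i => f (e.symm i), fun x => ?_, ?_⟩
    · rw [h x]
      exact (Equiv.sum_comp e.symm fun i => η i x • f i).symm
    · exact (Equiv.sum_comp e.symm fun i => ‖η i‖ * ‖f i‖).symm

/-- The coordinate functionals of a fixed basis of `E`, as continuous functionals. -/
noncomputable def coordDual (E : Type*) [NormedAddCommGroup E] [NormedSpace ℝ E]
    [FiniteDimensional ℝ E] (j : Fin (Module.finrank ℝ E)) : E →L[ℝ] ℝ :=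
  LinearMap.toContinuousLinearMap ((Module.finBasis ℝ E).coord j)

lemma sum_coordDual_smul [FiniteDimensional ℝ E] (x : E) :
    ∑ j, coordDual E j x • Module.finBasis ℝ E j = x := by
  simp [coordDual]

lemma sum_apply_smul_coordDual [FiniteDimensional ℝ E] (η : E →L[ℝ] ℝ) :
    ∑ j, η (Module.finBasis ℝ E j) • coordDual E j = η := by
  ext x
  conv_rhs => rw [← sum_coordDual_smul x]
  simp [mul_comm]

lemma map_eq_sum_coordDual [FiniteDimensional ℝ E] (w : E →L[ℝ] F) (x : E) :
    w x = ∑ j, coordDual E j x • w (Module.finBasis ℝ E j) := by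
  conv_lhs => rw [← sum_coordDual_smul x]
  simp

/-- A bound for `projNorm w` may be checked on the decompositions of `w`; finite dimensionality
guarantees that there is one, so that the infimum is not a junk value. -/
lemma le_mul_projNorm [FiniteDimensional ℝ E] (w : E →L[ℝ] F) {a c : ℝ} (hc : 0 ≤ c)
    (h : ∀ (k : ℕ) (η : Fin k → (E →L[ℝ] ℝ)) (f : Fin k → F),
      (∀ x, w x = ∑ i, η i x • f i) → a ≤ c * ∑ i, ‖η i‖ * ‖f i‖) : a ≤ c * projNorm w := by
  have hne : { r : ℝ | ∃ (k : ℕ) (η : Fin k → (E →L[ℝ] ℝ)) (f : Fin k → F),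
      (∀ x, w x = ∑ i, η i x • f i) ∧ r = ∑ i, ‖η i‖ * ‖f i‖ }.Nonempty :=
    ⟨_, _, _, _, map_eq_sum_coordDual w, rfl⟩
  rcases hc.eq_or_lt with rfl | hc
  · obtain ⟨r, k, η, f, hw, -⟩ := hne
    simpa using h k η f hw
  · rw [← div_le_iff₀' hc]
    refine le_csInf hne ?_
    rintro r ⟨k, η, f, hw, rfl⟩
    rw [div_le_iff₀' hc]
    exact h k η f hw

lemma projNorm_comp_le [FiniteDimensional ℝ E] (v : F →L[ℝ] Z) (w : E →L[ℝ] F) :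
    projNorm (v.comp w) ≤ ‖v‖ * projNorm w := by
  refine le_mul_projNorm w (norm_nonneg v) fun k η f hw => ?_
  refine (projNorm_le_sum (v.comp w) η (fun i => v (f i)) fun x => by simp [hw x]).trans ?_
  rw [Finset.mul_sum]
  refine Finset.sum_le_sum fun i _ => ?_
  have := mul_le_mul_of_nonneg_left (v.le_opNorm (f i)) (norm_nonneg (η i))
  linarith

/-! ### Grothendieck constants and factorizations -/

/-- The Grothendieck constant of `(E,F)` relative to the maps `A` satisfying `P`. -/
noncomputable def relKG (P : (E →L[ℝ] (E →L[ℝ] ℝ)) → Prop) (F : Type*)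
    [NormedAddCommGroup F] [NormedSpace ℝ F] : ℝ :=
  sSup { r : ℝ | ∃ (A : E →L[ℝ] (E →L[ℝ] ℝ)) (u : (E →L[ℝ] ℝ) →L[ℝ] F),
    P A ∧ ‖A‖ ≤ 1 ∧ ‖u‖ ≤ 1 ∧ r = projNorm (u.comp A.flip) }

lemma relKG_nonneg (P : (E →L[ℝ] (E →L[ℝ] ℝ)) → Prop) : 0 ≤ relKG P F := by
  apply Real.sSup_nonneg
  rintro r ⟨A, u, -, -, -, rfl⟩
  exact projNorm_nonneg _

/-- The supremum defining `relKG` is over a bounded set, hence an honest upper bound. -/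
lemma projNorm_le_relKG [FiniteDimensional ℝ E] {P : (E →L[ℝ] (E →L[ℝ] ℝ)) → Prop}
    {A : E →L[ℝ] (E →L[ℝ] ℝ)} {u : (E →L[ℝ] ℝ) →L[ℝ] F} (hP : P A) (hA : ‖A‖ ≤ 1) (hu : ‖u‖ ≤ 1) :
    projNorm (u.comp A.flip) ≤ relKG P F := by
  refine le_csSup ⟨∑ j, ‖coordDual E j‖ * ‖Module.finBasis ℝ E j‖, ?_⟩ ⟨A, u, hP, hA, hu, rfl⟩
  rintro r ⟨A, u, -, hA, hu, rfl⟩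
  refine (projNorm_le_sum _ _ _ (map_eq_sum_coordDual _)).trans ?_
  gcongr with j
  have h1 : ‖u.comp A.flip‖ ≤ 1 := by
    refine (ContinuousLinearMap.opNorm_comp_le _ _).trans ?_
    rw [ContinuousLinearMap.opNorm_flip]
    exact mul_le_one₀ hu A.opNorm_nonneg hA
  simpa using (u.comp A.flip).le_of_opNorm_le h1 (Module.finBasis ℝ E j)

lemma projNorm_le_norm_mul_relKG [FiniteDimensional ℝ E] {P : (E →L[ℝ] (E →L[ℝ] ℝ)) → Prop}
    {A : E →L[ℝ] (E →L[ℝ] ℝ)} (u : (E →L[ℝ] ℝ) →L[ℝ] F) (hP : P A) (hA : ‖A‖ ≤ 1) :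
    projNorm (u.comp A.flip) ≤ ‖u‖ * relKG P F := by
  rcases eq_or_ne u 0 with rfl | hu
  · rw [ContinuousLinearMap.opNorm_zero, zero_mul]
    simpa using projNorm_le_sum ((0 : (E →L[ℝ] ℝ) →L[ℝ] F).comp A.flip)
      (fun _ : Fin 0 => 0) (fun _ => 0) (by simp)
  have hu' : 0 < ‖u‖ := (norm_pos_iff (a := u)).2 hu
  have h1 : projNorm ((‖u‖⁻¹ • u).comp A.flip) ≤ relKG P F := by
    refine projNorm_le_relKG hP hA ?_
    refine ContinuousLinearMap.opNorm_le_bound _ zero_le_one fun η => ?_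
    rw [smul_apply, norm_smul, norm_inv, Real.norm_of_nonneg hu'.le, one_mul,
      inv_mul_le_iff₀ hu']
    exact u.le_opNorm η
  -- Homogeneity of the projective norm is the ideal property for the homothety of ratio `‖u‖`.
  have h2 : u.comp A.flip =
      (‖u‖ • ContinuousLinearMap.id ℝ F).comp ((‖u‖⁻¹ • u).comp A.flip) := by
    ext x
    simp [smul_smul, hu'.ne']
  have h3 : ‖‖u‖ • ContinuousLinearMap.id ℝ F‖ ≤ ‖u‖ := by
    rw [norm_smul, Real.norm_of_nonneg hu'.le]
    exact mul_le_of_le_one_right hu'.le ContinuousLinearMap.norm_id_le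
  rw [h2]
  exact (projNorm_comp_le _ _).trans (mul_le_mul h3 h1 (projNorm_nonneg _) hu'.le)

lemma relKG_le_of_factorization [FiniteDimensional ℝ E] (P : (E →L[ℝ] (E →L[ℝ] ℝ)) → Prop)
    (s : Y →L[ℝ] Z) (t : Z →L[ℝ] Y) (hts : t.comp s = ContinuousLinearMap.id ℝ Y) :
    relKG P Y ≤ ‖s‖ * ‖t‖ * relKG P Z := by
  have hK := relKG_nonneg (F := Z) P
  refine Real.sSup_le ?_ (by positivity)
  rintro r ⟨A, u, hP, hA, hu, rfl⟩
  have h1 : u.comp A.flip = t.comp ((s.comp u).comp A.flip) := by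
    ext x
    exact (DFunLike.congr_fun hts (u (A.flip x))).symm
  have h2 : ‖s.comp u‖ ≤ ‖s‖ :=
    (s.opNorm_comp_le u).trans (mul_le_of_le_one_right (norm_nonneg _) hu)
  calc projNorm (u.comp A.flip) = projNorm (t.comp ((s.comp u).comp A.flip)) := by rw [← h1]
    _ ≤ ‖t‖ * projNorm ((s.comp u).comp A.flip) := projNorm_comp_le _ _
    _ ≤ ‖t‖ * (‖s.comp u‖ * relKG P Z) := by
        gcongr
        exact projNorm_le_norm_mul_relKG _ hP hA
    _ ≤ ‖t‖ * (‖s‖ * relKG P Z) := by gcongr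
    _ = ‖s‖ * ‖t‖ * relKG P Z := by ring

lemma relKG_le_factConst_mul [FiniteDimensional ℝ E] (P : (E →L[ℝ] (E →L[ℝ] ℝ)) → Prop)
    (h : ∃ (s : Y →L[ℝ] Z) (t : Z →L[ℝ] Y), t.comp s = ContinuousLinearMap.id ℝ Y) :
    relKG P Y ≤ factConst Y Z * relKG P Z := by
  obtain ⟨s, t, hst⟩ := h
  rcases (relKG_nonneg (F := Z) P).eq_or_lt with h0 | h0
  · have := relKG_le_of_factorization P s t hst
    rw [← h0] at this ⊢
    simpa using this
  · rw [← div_le_iff₀ h0]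
    refine le_csInf ⟨_, s, t, hst, rfl⟩ ?_
    rintro r ⟨s, t, hst, rfl⟩
    rw [div_le_iff₀ h0]
    exact relKG_le_of_factorization P s t hst

/-! ### Duality between the injective and projective norms -/

/-- Trace duality between `w ∈ E* ⊗ F*` and `v ∈ E ⊗ F`, computed in the fixed basis of `E`. -/
noncomputable def tracePairing [FiniteDimensional ℝ E] (w : E →L[ℝ] (F →L[ℝ] ℝ)) :
    ((E →L[ℝ] ℝ) →L[ℝ] F) →ₗ[ℝ] ℝ where
  toFun v := ∑ j, w (Module.finBasis ℝ E j) (v (coordDual E j))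
  map_add' v v' := by simp [Finset.sum_add_distrib]
  map_smul' c v := by simp [Finset.mul_sum]

/-- A finite net of the unit ball of a finite dimensional space almost computes operator norms. -/
lemma exists_finite_norming [FiniteDimensional ℝ X] {δ : ℝ} (hδ : 0 < δ) :
    ∃ t : Finset X, (∀ η ∈ t, ‖η‖ ≤ 1) ∧
      ∀ (v : X →L[ℝ] F) (M : ℝ), 0 ≤ M → (∀ η ∈ t, ‖v η‖ ≤ M) → (1 - δ) * ‖v‖ ≤ M := by
  obtain ⟨t, ht, hfin, hcov⟩ :=
    (isCompact_closedBall (0 : X) 1).finite_cover_balls hδ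
  refine ⟨hfin.toFinset, fun η hη => ?_, fun v M hM hv => ?_⟩
  · simpa using ht (hfin.mem_toFinset.1 hη)
  · have h1 : ‖v‖ ≤ M + δ * ‖v‖ := by
      refine ContinuousLinearMap.opNorm_le_of_unit_norm (by positivity) fun x hx => ?_
      have hx' : x ∈ Metric.closedBall (0 : X) 1 := by simp [hx]
      obtain ⟨η, hη, hxη⟩ := Set.mem_iUnion₂.1 (hcov hx')
      rw [Metric.mem_ball, dist_eq_norm] at hxη
      calc ‖v x‖ = ‖v η + v (x - η)‖ := by simp
        _ ≤ ‖v η‖ + ‖v (x - η)‖ := norm_add_le _ _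
        _ ≤ M + δ * ‖v‖ := by
            gcongr
            · exact hv η (hfin.mem_toFinset.2 hη)
            · rw [mul_comm]
              exact v.le_opNorm_of_le hxη.le
    linarith

/-- The dual of `ℓ_∞^ι(F)` is `ℓ_1^ι(F*)`, up to an arbitrarily small loss. -/
lemma sum_norm_comp_single_le {ι : Type*} [Fintype ι] [DecidableEq ι] (g : (ι → F) →L[ℝ] ℝ) {δ : ℝ}
    (hδ : 0 < δ) :
    (1 - δ) * ∑ i, ‖g.comp (ContinuousLinearMap.single ℝ (fun _ : ι => F) i)‖ ≤ ‖g‖ := by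
  set G : ι → F →L[ℝ] ℝ := fun i => g.comp (ContinuousLinearMap.single ℝ (fun _ : ι => F) i) with hG
  have h1 : ∀ i, ∃ f : F, ‖f‖ ≤ 1 ∧ (1 - δ) * ‖G i‖ ≤ G i f := by
    intro i
    rcases eq_or_ne (G i) 0 with h0 | h0
    · exact ⟨0, by simp, by simp [h0]⟩
    have hpos : 0 < ‖G i‖ := norm_pos_iff.2 h0
    obtain ⟨f, hf, hlt⟩ := (G i).exists_lt_apply_of_lt_opNorm
      (show (1 - δ) * ‖G i‖ < ‖G i‖ by nlinarith)
    rw [Real.norm_eq_abs] at hlt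
    rcases abs_cases (G i f) with ⟨h, -⟩ | ⟨h, -⟩
    · exact ⟨f, hf.le, by linarith⟩
    · exact ⟨-f, by simpa using hf.le, by rw [map_neg]; linarith⟩
  choose f hf hGf using h1
  have h2 : g f = ∑ i, G i (f i) := by
    conv_lhs => rw [← Finset.univ_sum_single f]
    rw [map_sum]
    rfl
  have h3 : ‖f‖ ≤ 1 := (pi_norm_le_iff_of_nonneg zero_le_one).2 hf
  calc (1 - δ) * ∑ i, ‖G i‖ = ∑ i, (1 - δ) * ‖G i‖ := Finset.mul_sum _ _ _
    _ ≤ ∑ i, G i (f i) := Finset.sum_le_sum fun i _ => hGf i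
    _ = g f := h2.symm
    _ ≤ ‖g f‖ := le_abs_self _
    _ ≤ ‖g‖ := by simpa using g.le_opNorm_of_le h3

/-- The projective norm on `E* ⊗ F*` is at most the norm as a functional on `E ⊗̌ F`: the nontrivial
half of the isometry between `E* ⊗̂ F*` and the dual of `E ⊗̌ F`. -/
lemma projNorm_le_of_tracePairing_le [FiniteDimensional ℝ E] (w : E →L[ℝ] (F →L[ℝ] ℝ)) {C : ℝ}
    (hC : 0 ≤ C) (h : ∀ v, |tracePairing w v| ≤ C * ‖v‖) : projNorm w ≤ C := by
  classical
  have key : ∀ δ : ℝ, 0 < δ → δ < 1 → (1 - δ) * ((1 - δ) * projNorm w) ≤ C := by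
    intro δ hδ hδ1
    have hδ' : 0 < 1 - δ := by linarith
    obtain ⟨t, ht, hnorm⟩ := exists_finite_norming (X := E →L[ℝ] ℝ) (F := F) hδ
    let J : ((E →L[ℝ] ℝ) →L[ℝ] F) →ₗ[ℝ] (t → F) :=
      { toFun := fun v η => v η
        map_add' := fun _ _ => rfl
        map_smul' := fun _ _ => rfl }
    have hJ : ∀ v, (1 - δ) * ‖v‖ ≤ ‖J v‖ := fun v =>
      hnorm v _ (norm_nonneg _) fun η hη => norm_le_pi_norm (J v) ⟨η, hη⟩
    have hinj : Function.Injective J := by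
      rw [injective_iff_map_eq_zero]
      intro v hv
      have := hJ v
      rw [hv, norm_zero] at this
      exact (norm_le_zero_iff (a := v)).1 (nonpos_of_mul_nonpos_right this hδ')
    let e := LinearEquiv.ofInjective J hinj
    let φ : (LinearMap.range J) →L[ℝ] ℝ :=
      ((tracePairing w).comp e.symm.toLinearMap).mkContinuous (C / (1 - δ)) (by
        intro y
        obtain ⟨v, rfl⟩ := e.surjective y
        have h1 : ‖v‖ ≤ ‖e v‖ / (1 - δ) := by
          rw [le_div_iff₀' hδ']
          exact hJ v
        calc ‖tracePairing w (e.symm (e v))‖ ≤ C * ‖v‖ := by simpa using h v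
          _ ≤ C * (‖e v‖ / (1 - δ)) := by gcongr
          _ = C / (1 - δ) * ‖e v‖ := by ring)
    obtain ⟨g, hg, hgφ⟩ := exists_extension_norm_eq (LinearMap.range J) φ
    have hgn : (1 - δ) * ‖g‖ ≤ C := by
      rw [hgφ, ← le_div_iff₀' hδ']
      exact LinearMap.mkContinuous_norm_le _ (by positivity) _
    have hgJ : ∀ v, g (J v) = tracePairing w v := by
      intro v
      have := hg (e v)
      simpa [φ, e] using this
    set G : t → F →L[ℝ] ℝ :=
      fun i => g.comp (ContinuousLinearMap.single ℝ (fun _ : t => F) i) with hG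
    have hdec : ∀ x, w x = ∑ η : t, (η : E →L[ℝ] ℝ) x • G η := by
      intro x
      ext f
      -- Evaluate both sides at the elementary tensor `x ⊗ f`.
      let v : (E →L[ℝ] ℝ) →L[ℝ] F := (ContinuousLinearMap.apply ℝ ℝ x).smulRight f
      have h1 : tracePairing w v = w x f := by
        rw [map_eq_sum_coordDual w x]
        simp [tracePairing, v]
      have h2 : g (J v) = ∑ η : t, G η (J v η) := by
        conv_lhs => rw [← Finset.univ_sum_single (J v)]
        rw [map_sum]
        rfl
      rw [← h1, ← hgJ, h2]
      simp [J, v]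
    have h1 : projNorm w ≤ ∑ η, ‖G η‖ := by
      refine (projNorm_le_sum w _ _ hdec).trans (Finset.sum_le_sum fun η _ => ?_)
      exact mul_le_of_le_one_left (norm_nonneg _) (ht η η.2)
    calc (1 - δ) * ((1 - δ) * projNorm w) ≤ (1 - δ) * ((1 - δ) * ∑ η, ‖G η‖) := by gcongr
      _ ≤ (1 - δ) * ‖g‖ := by
          gcongr
          exact sum_norm_comp_single_le g hδ
      _ ≤ C := hgn
  have hlim : Filter.Tendsto (fun δ : ℝ => (1 - δ) * ((1 - δ) * projNorm w))
      (nhdsWithin 0 (Set.Ioi 0)) (nhds (projNorm w)) := by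
    have hc : Continuous fun δ : ℝ => (1 - δ) * ((1 - δ) * projNorm w) := by fun_prop
    simpa using (hc.tendsto 0).mono_left nhdsWithin_le_nhds
  refine le_of_tendsto hlim ?_
  filter_upwards [Ioo_mem_nhdsGT (zero_lt_one : (0 : ℝ) < 1)] with δ hδ
  exact key δ hδ.1 hδ.2

/-! ### Comparison of `F` and its dual -/

/-- `⟨(A ⊗ id) u, v⟩ = ⟨u, (Aᵀ ⊗ id) v⟩`, together with the duality between the operator norm of
`u : E* → F*` and the projective norm on `E* ⊗ F`. -/
lemma tracePairing_comp_le [FiniteDimensional ℝ E] (A : E →L[ℝ] (E →L[ℝ] ℝ))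
    (u : (E →L[ℝ] ℝ) →L[ℝ] (F →L[ℝ] ℝ)) (v : (E →L[ℝ] ℝ) →L[ℝ] F) :
    |tracePairing (u.comp A.flip) v| ≤ ‖u‖ * projNorm (v.comp A) := by
  have hswap : tracePairing (u.comp A.flip) v =
      ∑ k, u (coordDual E k) (v (A (Module.finBasis ℝ E k))) := by
    have h1 : ∀ j, u (A.flip (Module.finBasis ℝ E j)) =
        ∑ k, A (Module.finBasis ℝ E k) (Module.finBasis ℝ E j) • u (coordDual E k) := by
      intro j
      conv_lhs => rw [← sum_apply_smul_coordDual (A.flip (Module.finBasis ℝ E j))]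
      simp
    have h2 : ∀ k, v (A (Module.finBasis ℝ E k)) =
        ∑ j, A (Module.finBasis ℝ E k) (Module.finBasis ℝ E j) • v (coordDual E j) := by
      intro k
      conv_lhs => rw [← sum_apply_smul_coordDual (A (Module.finBasis ℝ E k))]
      simp
    simp only [tracePairing, LinearMap.coe_mk, AddHom.coe_mk, ContinuousLinearMap.comp_apply, h1, h2]
    simp only [sum_apply, map_sum, map_smul, smul_apply]
    exact Finset.sum_comm
  refine le_mul_projNorm (v.comp A) (norm_nonneg u) fun k η f hv => ?_
  have hsum : tracePairing (u.comp A.flip) v = ∑ i, u (η i) (f i) := by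
    rw [hswap]
    have h1 : ∀ i, u (η i) =
        ∑ k, η i (Module.finBasis ℝ E k) • u (coordDual E k) := by
      intro i
      conv_lhs => rw [← sum_apply_smul_coordDual (η i)]
      simp
    have h2 : ∀ k, v (A (Module.finBasis ℝ E k)) =
        ∑ i, η i (Module.finBasis ℝ E k) • f i := fun k => hv _
    simp only [h1, h2]
    simp only [sum_apply, map_sum, map_smul, smul_apply]
    exact Finset.sum_comm
  rw [hsum, Finset.mul_sum]
  refine (Finset.abs_sum_le_sum_abs _ _).trans (Finset.sum_le_sum fun i _ => ?_)
  rw [← mul_assoc]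
  exact u.le_opNorm₂ (η i) (f i)

lemma relKG_dual_le [FiniteDimensional ℝ E] {P : (E →L[ℝ] (E →L[ℝ] ℝ)) → Prop}
    (hP : ∀ A, P A → P A.flip) : relKG P (F →L[ℝ] ℝ) ≤ relKG P F := by
  have hK := relKG_nonneg (F := F) P
  refine Real.sSup_le ?_ hK
  rintro r ⟨A, u, hA, hA1, hu, rfl⟩
  refine projNorm_le_of_tracePairing_le _ hK fun v => ?_
  have h1 : projNorm (v.comp A) ≤ ‖v‖ * relKG P F := by
    have := projNorm_le_norm_mul_relKG v (hP A hA) ((ContinuousLinearMap.opNorm_flip A).trans_le hA1)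
    rwa [ContinuousLinearMap.flip_flip] at this
  calc |tracePairing (u.comp A.flip) v| ≤ ‖u‖ * projNorm (v.comp A) := tracePairing_comp_le A u v
    _ ≤ 1 * (‖v‖ * relKG P F) := mul_le_mul hu h1 (projNorm_nonneg _) zero_le_one
    _ = relKG P F * ‖v‖ := by ring

lemma relKG_le_min [FiniteDimensional ℝ E] {P : (E →L[ℝ] (E →L[ℝ] ℝ)) → Prop}
    (hP : ∀ A, P A → P A.flip)
    (hYF : ∃ (u : Y →L[ℝ] F) (v : F →L[ℝ] Y), v.comp u = ContinuousLinearMap.id ℝ Y)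
    (hYF' : ∃ (u : Y →L[ℝ] (F →L[ℝ] ℝ)) (v : (F →L[ℝ] ℝ) →L[ℝ] Y),
      v.comp u = ContinuousLinearMap.id ℝ Y) :
    relKG P Y ≤ min (factConst Y F) (factConst Y (F →L[ℝ] ℝ)) * relKG P F := by
  have hf : 0 ≤ factConst Y (F →L[ℝ] ℝ) := by
    apply Real.sInf_nonneg
    rintro r ⟨u, v, -, rfl⟩
    positivity
  rcases min_choice (factConst Y F) (factConst Y (F →L[ℝ] ℝ)) with h | h <;> rw [h]
  · exact relKG_le_factConst_mul P hYF
  · exact (relKG_le_factConst_mul P hYF').trans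
      (mul_le_mul_of_nonneg_left (relKG_dual_le hP) hf)

lemma KG_eq_relKG : KG E F = relKG (E := E) (fun _ => True) F := by
  simp only [KG, relKG, true_and]

/-- A non-negative `A` is symmetric, so its transpose has the same decomposition. -/
lemma IsNonnegMap.flip {A : E →L[ℝ] (E →L[ℝ] ℝ)} (hA : IsNonnegMap A) : IsNonnegMap A.flip := by
  obtain ⟨k, η, h⟩ := hA
  refine ⟨k, η, fun x => ?_⟩
  ext y
  simp [h, mul_comm]

end Auxiliary

/-- If `Y` factors through `F` and through `F*` (so that `f(Y,F)` and `f(Y,F*)` exist), then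
`K_G(E,Y) ≤ min {f(Y,F), f(Y,F*)}·K_G(E,F)`, and likewise for the positive constants. -/
theorem statement5 (E F Y : Type*)
    [NormedAddCommGroup E] [NormedSpace ℝ E] [FiniteDimensional ℝ E]
    [NormedAddCommGroup F] [NormedSpace ℝ F] [CompleteSpace F]
    [NormedAddCommGroup Y] [NormedSpace ℝ Y] [CompleteSpace Y]
    (hYF : ∃ (u : Y →L[ℝ] F) (v : F →L[ℝ] Y), v.comp u = ContinuousLinearMap.id ℝ Y)
    (hYF' : ∃ (u : Y →L[ℝ] (F →L[ℝ] ℝ)) (v : (F →L[ℝ] ℝ) →L[ℝ] Y),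
      v.comp u = ContinuousLinearMap.id ℝ Y) :
    KG E Y ≤ min (factConst Y F) (factConst Y (F →L[ℝ] ℝ)) * KG E F ∧
    KGpos E Y ≤ min (factConst Y F) (factConst Y (F →L[ℝ] ℝ)) * KGpos E F := by
  simp only [KG_eq_relKG]
  exact ⟨relKG_le_min (fun _ h => h) hYF hYF', relKG_le_min (fun _ h => h.flip) hYF hYF'⟩
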